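/- Let 0 < δ < 1/2 and let p = (p_k)_{k≥0} be a sequence of positive integers with p_0 = 1, p_k dividing p_{k+1}, p_{k+1}/p_k ≥ 3 for all k, and Σ_{k=1}^∞ 2p_k/p_{k+1} < δ. Then the shift space X(p) ⊆ {0,1}^∞ obtained as the orbit closure of the Oxtoby sequence with scale p satisfies d̄^H(X(p), {0^∞, 1^∞}) > 1 − δ and d̄_M^H(M_σ(X(p)), M_σ({0^∞, 1^∞})) < δ. -/

import Mathlib

open MeasureTheory Filter Topology

namespace DbarPaper

variable {A : Type} [Fintype A] [DecidableEq A] [Inhabited A]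
  [TopologicalSpace A] [DiscreteTopology A]
  [MeasurableSpace A] [MeasurableSingletonClass A]

/-- The shift map on the full shift `𝒜^∞ = ℕ → A`. -/
def shift : (ℕ → A) → (ℕ → A) := fun x n => x (n + 1)

/-- A shift space: a nonempty, closed, shift-invariant subset of the full shift. -/
def ShiftSpace (X : Set (ℕ → A)) : Prop :=
  X.Nonempty ∧ IsClosed X ∧ ∀ x ∈ X, shift x ∈ X

/-- The word `w` appears in the sequence `x`. -/
def occursIn (w : List A) (x : ℕ → A) : Prop :=
  ∃ i : ℕ, w = List.ofFn (fun k : Fin w.length => x (i + (k : ℕ)))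

/-- The language of a set `X`: all finite words appearing in points of `X`. -/
def lang (X : Set (ℕ → A)) : Set (List A) := {w | ∃ x ∈ X, occursIn w x}

/-- Words of length `n` in the language of `X`. -/
def langN (n : ℕ) (X : Set (ℕ → A)) : Set (List A) := {w | w ∈ lang X ∧ w.length = n}

/-- The pseudometric `d̄` on the full shift. -/
noncomputable def dbar (x y : ℕ → A) : ℝ :=
  Filter.limsup
    (fun n => (((Finset.range n).filter (fun j => x j ≠ y j)).card : ℝ) / (n : ℝ))
    Filter.atTop

/-- Hausdorff "distance" between two sets induced by a `ℝ`-valued distance. -/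
noncomputable def hausdist {Z : Type*} (d : Z → Z → ℝ) (P Q : Set Z) : ℝ :=
  max (⨆ p : P, ⨅ q : Q, d p q) (⨆ q : Q, ⨅ p : P, d p q)

/-- A probability measure is shift-invariant. -/
def invariantPM (μ : ProbabilityMeasure (ℕ → A)) : Prop :=
  (μ : Measure (ℕ → A)).map shift = (μ : Measure (ℕ → A))

/-- `M_σ(X)`: shift-invariant Borel probability measures giving `X` full measure. -/
def Msigma (X : Set (ℕ → A)) : Set (ProbabilityMeasure (ℕ → A)) :=
  {μ | invariantPM μ ∧ μ X = 1}

/-- `ξ` is a joining of `μ` and `ν`: a `σ×σ`-invariant measure on the product with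
marginals `μ` and `ν`. -/
def IsJoining (ξ : Measure ((ℕ → A) × (ℕ → A))) (μ ν : ProbabilityMeasure (ℕ → A)) : Prop :=
  ξ.map (Prod.map shift shift) = ξ ∧
  ξ.map Prod.fst = (μ : Measure (ℕ → A)) ∧ ξ.map Prod.snd = (ν : Measure (ℕ → A))

/-- Ornstein's metric `d̄_M` on invariant measures. -/
noncomputable def dbarM (μ ν : ProbabilityMeasure (ℕ → A)) : ℝ :=
  sInf {r : ℝ | ∃ ξ : Measure ((ℕ → A) × (ℕ → A)),
    IsJoining ξ μ ν ∧ r = (ξ {p | p.1 0 ≠ p.2 0}).toReal}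

/-- `d̄_M`-stability of a shift space (Austin). -/
def DbarMStable (X : Set (ℕ → A)) : Prop :=
  ∀ ε : ℝ, 0 < ε → ∃ U : Set (ProbabilityMeasure (ℕ → A)), IsOpen U ∧ Msigma X ⊆ U ∧
    ∀ ν ∈ U, invariantPM ν → ∃ μ ∈ Msigma X, dbarM μ ν < ε

/-- The infinite concatenation of a sequence of (nonempty) words. -/
def concatSeq (w : ℕ → List A) : ℕ → A := fun n =>
  ((List.ofFn (fun i : Fin (n + 1) => w (i : ℕ))).flatten).getD n default

/-- The `d̄`-shadowing property. -/
def DbarShadowing (X : Set (ℕ → A)) : Prop :=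
  ∀ ε : ℝ, 0 < ε → ∃ N : ℕ, 0 < N ∧ ∀ w : ℕ → List A,
    (∀ j, w j ∈ lang X) → (∀ j, N ≤ (w j).length) →
    ∃ x' ∈ X, dbar (concatSeq w) x' < ε

/-- `U_n(X)`: the union of cylinders of words of length `n` in the language of `X`. -/
def cylNbhd (X : Set (ℕ → A)) (n : ℕ) : Set (ℕ → A) :=
  {x | List.ofFn (fun k : Fin n => x (k : ℕ)) ∈ lang X}

/-- The `n`-th (topological) Markov approximation of `X`: all sequences whose subwords of
length `n+1` belong to the language of `X`. -/
def markovApprox (X : Set (ℕ → A)) (n : ℕ) : Set (ℕ → A) :=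
  {x | ∀ i : ℕ, List.ofFn (fun k : Fin (n + 1) => x (i + (k : ℕ))) ∈ lang X}

/-- Transitivity, in terms of the language. -/
def TransitiveShift (X : Set (ℕ → A)) : Prop :=
  ∀ u ∈ lang X, ∀ w ∈ lang X, ∃ v : List A, u ++ v ++ w ∈ lang X

/-- Topological mixing, in terms of the language. -/
def MixingShift (X : Set (ℕ → A)) : Prop :=
  ∀ u ∈ lang X, ∀ w ∈ lang X, ∃ N : ℕ, ∀ m : ℕ, N ≤ m →
    ∃ v : List A, v.length = m ∧ u ++ v ++ w ∈ lang X

/-- Chain mixing: all but finitely many Markov approximations are topologically mixing. -/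
def ChainMixing (X : Set (ℕ → A)) : Prop :=
  ∃ N : ℕ, ∀ n : ℕ, N ≤ n → MixingShift (markovApprox X n)

/-- `C` is the measure center of `X`: the smallest shift space contained in `X` of full
measure for every invariant measure of `X`. -/
def IsMeasureCenter (X C : Set (ℕ → A)) : Prop :=
  ShiftSpace C ∧ C ⊆ X ∧ (∀ μ ∈ Msigma X, μ C = 1) ∧
  ∀ Y : Set (ℕ → A), ShiftSpace Y → Y ⊆ X → (∀ μ ∈ Msigma X, μ Y = 1) → C ⊆ Y

/-- Measure of the cylinder determined by a word of length `n`. -/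
noncomputable def cylMeasure (μ : ProbabilityMeasure (ℕ → A)) {n : ℕ} (w : Fin n → A) : ℝ :=
  ((μ : Measure (ℕ → A)) {x | ∀ k : Fin n, x (k : ℕ) = w k}).toReal

/-- Entropy of the partition into cylinders of length `n`. -/
noncomputable def blockEntropy (μ : ProbabilityMeasure (ℕ → A)) (n : ℕ) : ℝ :=
  -∑ w : Fin n → A, cylMeasure μ w * Real.log (cylMeasure μ w)

/-- Kolmogorov–Sinai entropy of a shift-invariant measure. -/
noncomputable def ksEntropy (μ : ProbabilityMeasure (ℕ → A)) : ℝ :=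
  Filter.limsup (fun n => blockEntropy μ n / (n : ℝ)) Filter.atTop

/-- `μ` is ergodic for the shift. -/
def ErgodicPM (μ : ProbabilityMeasure (ℕ → A)) : Prop :=
  Ergodic shift (μ : Measure (ℕ → A))

/-- Ergodic measures are entropy dense in `M_σ(X)`. -/
def EntropyDense (X : Set (ℕ → A)) : Prop :=
  ∀ μ ∈ Msigma X, ∀ U : Set (ProbabilityMeasure (ℕ → A)), IsOpen U → μ ∈ U →
    ∀ ε : ℝ, 0 < ε →
      ∃ ν ∈ Msigma X, ν ∈ U ∧ ErgodicPM ν ∧ |ksEntropy ν - ksEntropy μ| < ε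

/-- Topological entropy of a shift space. -/
noncomputable def topEntropy (X : Set (ℕ → A)) : ℝ :=
  Filter.limsup (fun n => Real.log (Nat.card ↥(langN n X)) / (n : ℝ)) Filter.atTop

/-- The standard metric on the full shift. -/
noncomputable def rho (x y : ℕ → A) : ℝ :=
  open scoped Classical in
  if x = y then 0 else (2 : ℝ) ^ (-((sInf {j : ℕ | x j ≠ y j} : ℕ) : ℤ))

/-- Proximality of a shift space. -/
def ProximalShift (X : Set (ℕ → A)) : Prop :=
  ∀ x ∈ X, ∀ y ∈ X,
    Filter.liminf (fun n => rho (shift^[n] x) (shift^[n] y)) Filter.atTop = 0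

/-- Minimality of a shift space. -/
def MinimalShift (X : Set (ℕ → A)) : Prop :=
  ShiftSpace X ∧ ∀ Y : Set (ℕ → A), ShiftSpace Y → Y ⊆ X → Y = X

/-- An `A`-labeled directed multigraph on vertices `V` with edges `E`. -/
structure LabeledGraph (A V E : Type*) where
  src : E → V
  dst : E → V
  lab : E → A

namespace LabeledGraph

variable {A' V E : Type*}

/-- `es` is a path in `G` from `u` to `v`. -/
def PathFromTo (G : LabeledGraph A' V E) (es : List E) (u v : V) : Prop :=
  es.Chain' (fun e f => G.dst e = G.src f) ∧
  es.head?.map G.src = some u ∧ es.getLast?.map G.dst = some v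

/-- `G` is strongly connected. -/
def StronglyConnected (G : LabeledGraph A' V E) : Prop :=
  ∀ u v : V, ∃ es : List E, G.PathFromTo es u v

/-- `d` is the period of `G`: the gcd of lengths of closed paths. -/
def HasPeriod (G : LabeledGraph A' V E) (d : ℕ) : Prop :=
  (∀ (es : List E) (u : V), G.PathFromTo es u u → d ∣ es.length) ∧
  ∀ d' : ℕ, (∀ (es : List E) (u : V), G.PathFromTo es u u → d' ∣ es.length) → d' ∣ d

/-- `b` is a safe symbol for `G`. -/
def SafeSymbol (G : LabeledGraph A' V E) (b : A') : Prop :=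
  ∀ e : E, ∃ e' : E, G.src e' = G.src e ∧ G.dst e' = G.dst e ∧ G.lab e' = b

/-- The shift space presented by the labeled graph `G`: labels read along infinite paths. -/
def presents (G : LabeledGraph A' V E) : Set (ℕ → A') :=
  {x | ∃ e : ℕ → E, (∀ j, G.dst (e j) = G.src (e (j + 1))) ∧ ∀ j, x j = G.lab (e j)}

end LabeledGraph

/-- The coupling of a family of labeled graphs: an edge labeled `a` from `v` to `v'` exists
iff each `G k` has an edge from `v k` to `v' k` labeled `a`. -/
def coupling {A' : Type*} {n : ℕ} {V E : Fin n → Type*}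
    (G : ∀ k, LabeledGraph A' (V k) (E k)) :
    LabeledGraph A' (∀ k, V k) {p : (∀ k, E k) × A' // ∀ k, (G k).lab (p.1 k) = p.2} where
  src p := fun k => (G k).src (p.1.1 k)
  dst p := fun k => (G k).dst (p.1.1 k)
  lab p := p.1.2

/-- Sofic shift spaces: those presented by some finite labeled graph. -/
def Sofic (X : Set (ℕ → A)) : Prop :=
  ∃ (V E : Type) (_ : Fintype V) (_ : Fintype E) (G : LabeledGraph A V E),
    X = G.presents

/-- The coded shift generated by a finite set of words `B`: the closure of the set of all
shifts of infinite concatenations of words from `B`. -/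
def codedShift (B : Finset (List A)) : Set (ℕ → A) :=
  closure {x | ∃ (b : ℕ → List A) (k : ℕ), (∀ i, b i ∈ B) ∧ x = shift^[k] (concatSeq b)}


/-- The sets `M_k` from the definition of the Oxtoby sequence. -/
def oxtobyM (p : ℕ → ℕ) (k : ℕ) : Set ℕ :=
  if k = 0 then ∅ else
    {i | ∃ m : ℕ, -((p k : ℤ)) ≤ (i : ℤ) - m * p (k + 1) ∧ (i : ℤ) - m * p (k + 1) < p k}

/-- The Oxtoby sequence with scale `p`: its `i`-th entry is `k(i) mod 2`, where `k(i)` is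
the unique (i.e. least) `k` with `i ∈ M_k \ ⋃_{ℓ<k} M_ℓ`. -/
noncomputable def oxtoby (p : ℕ → ℕ) : ℕ → Bool := fun i =>
  decide (sInf {k : ℕ | i ∈ oxtobyM p k} % 2 = 1)

/-- The orbit closure of the Oxtoby sequence with scale `p`. -/
noncomputable def oxtobyShift (p : ℕ → ℕ) : Set (ℕ → Bool) :=
  closure {y | ∃ n : ℕ, y = shift^[n] (oxtoby p)}

/-!
Positions of level at most `L`, that is those lying in `M_1 ∪ ⋯ ∪ M_L`, have density at most
`s = Σ 2 p_k / p_{k+1}` in every window of length divisible by `p_{L+1}`. On each block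
`[t p_{L+1}, (t+1) p_{L+1})` all remaining positions share one level, hence one symbol, and on the
first block this level is `L + 1`. Letting `L` run through one parity, the Oxtoby sequence agrees
with either constant on a proportion at most `s` of arbitrarily long prefixes, so its `d̄`-distance
to both constants is at least `1 - s`.

For measures, if every orbit segment of length `n` seen by `μ` can be matched with a point of a
shift space `Y` at an average cost of `n s` mismatches, then averaging the law of the matched pair
along its first `n` shifts and passing to a weak limit as `n → ∞` gives a joining of `μ` with an
element of `M_σ(Y)` of cost at most `s`. A point of `X(p)` is matched with the constant sequence of
its majority symbol: when `L` is large, a window of fixed length in the Oxtoby sequence rarely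
straddles two blocks of length `p_{L+1}`. A constant sequence is matched with the Oxtoby sequence
shifted to one of its first two blocks, where the dominant symbols are opposite.
-/

/-- The number of positions below `n` at which `x` and `y` differ, so that
`dbar x y = limsup (mismatchCount n x y / n)`. -/
def mismatchCount {α : Type} [DecidableEq α] (n : ℕ) (x y : ℕ → α) : ℕ :=
  ((Finset.range n).filter fun j => x j ≠ y j).card

section Mismatch

variable {α : Type} [DecidableEq α]

lemma mismatchCount_le (n : ℕ) (x y : ℕ → α) : mismatchCount n x y ≤ n :=
  (Finset.card_filter_le _ _).trans (Finset.card_range n).le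

lemma mismatchCount_div_le_one (n : ℕ) (x y : ℕ → α) : (mismatchCount n x y : ℝ) / n ≤ 1 :=
  div_le_one_of_le₀ (Nat.cast_le.2 (mismatchCount_le n x y)) n.cast_nonneg

lemma mismatchCount_comm (n : ℕ) (x y : ℕ → α) : mismatchCount n x y = mismatchCount n y x := by
  simp only [mismatchCount, ne_comm]

lemma mismatchCount_congr_left {n : ℕ} {x x' : ℕ → α} (h : ∀ j < n, x j = x' j) (y : ℕ → α) :
    mismatchCount n x y = mismatchCount n x' y := by
  refine congrArg Finset.card (Finset.filter_congr fun j hj => ?_)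
  rw [h j (Finset.mem_range.1 hj)]

lemma mismatchCount_add_mismatchCount_not (n : ℕ) (y : ℕ → Bool) (c : Bool) :
    mismatchCount n y (fun _ => c) + mismatchCount n y (fun _ => !c) = n := by
  simpa [mismatchCount] using
    Finset.card_filter_add_card_filter_not (s := Finset.range n) (fun j => y j ≠ c)

lemma frequently_le_dbar {x y : ℕ → α} {r : ℝ}
    (h : ∃ᶠ n in atTop, r ≤ (mismatchCount n x y : ℝ) / n) : r ≤ dbar x y :=
  le_limsup_of_frequently_le h (isBoundedUnder_of ⟨1, fun n => mismatchCount_div_le_one n x y⟩)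

lemma dbar_nonneg (x y : ℕ → α) : 0 ≤ dbar x y :=
  frequently_le_dbar (Frequently.of_forall fun n => by positivity)

lemma dbar_le_one (x y : ℕ → α) : dbar x y ≤ 1 :=
  limsup_le_of_le (IsCoboundedUnder.of_frequently_ge (a := 0)
    (Frequently.of_forall fun n => by positivity))
    (Eventually.of_forall fun n => mismatchCount_div_le_one n x y)

end Mismatch

section Hausdist

variable {Z : Type*} {d : Z → Z → ℝ} {P Q : Set Z} {s C : ℝ}

lemma hausdist_le (hd : ∀ x y, 0 ≤ d x y) (hs : 0 ≤ s) (hP : ∀ x ∈ P, ∃ y ∈ Q, d x y ≤ s)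
    (hQ : ∀ y ∈ Q, ∃ x ∈ P, d x y ≤ s) : hausdist d P Q ≤ s := by
  refine max_le (Real.iSup_le ?_ hs) (Real.iSup_le ?_ hs)
  · rintro ⟨x, hx⟩
    obtain ⟨y, hy, hxy⟩ := hP x hx
    exact (ciInf_le ⟨0, Set.forall_mem_range.2 fun _ => hd _ _⟩ (⟨y, hy⟩ : Q)).trans hxy
  · rintro ⟨y, hy⟩
    obtain ⟨x, hx, hxy⟩ := hQ y hy
    exact (ciInf_le ⟨0, Set.forall_mem_range.2 fun _ => hd _ _⟩ (⟨x, hx⟩ : P)).trans hxy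

lemma le_hausdist (hd : ∀ x y, 0 ≤ d x y) (hC : ∀ x y, d x y ≤ C) (hQ : Q.Nonempty) {x : Z}
    (hx : x ∈ P) (h : ∀ y ∈ Q, s ≤ d x y) : s ≤ hausdist d P Q := by
  have : Nonempty Q := hQ.to_subtype
  obtain ⟨y, hy⟩ := hQ
  have hbdd : BddAbove (Set.range fun x : P => ⨅ y : Q, d x y) :=
    ⟨C, Set.forall_mem_range.2 fun x =>
      (ciInf_le ⟨0, Set.forall_mem_range.2 fun _ => hd _ _⟩ (⟨y, hy⟩ : Q)).trans (hC _ _)⟩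
  calc s ≤ ⨅ y : Q, d x y := le_ciInf fun y => h y y.2
    _ ≤ ⨆ x : P, ⨅ y : Q, d x y := le_ciSup hbdd ⟨x, hx⟩
    _ ≤ hausdist d P Q := le_max_left _ _

end Hausdist

section OrbitAverage

variable {Z : Type*} [MeasurableSpace Z] {T : Z → Z}

lemma integral_birkhoffSum {μ : Measure Z} (hT : MeasurePreserving T μ μ) {f : Z → ℝ}
    (hf : Integrable f μ) (n : ℕ) : ∫ z, birkhoffSum T f n z ∂μ = n * ∫ z, f z ∂μ := by
  have hiterate (j : ℕ) : ∫ z, f (T^[j] z) ∂μ = ∫ z, f z ∂μ := by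
    have h := hT.iterate j
    conv_rhs => rw [← h.map_eq]
    exact (integral_map h.aemeasurable (by rw [h.map_eq]; exact hf.1)).symm
  have hint (j : ℕ) : Integrable (fun z => f (T^[j] z)) μ :=
    (hT.iterate j).integrable_comp_of_integrable hf
  simp only [birkhoffSum]
  rw [integral_finsetSum _ fun j _ => hint j]
  simp only [hiterate, Finset.sum_const, Finset.card_range, nsmul_eq_mul]

lemma integral_le_of_ae_birkhoffSum_le {μ : Measure Z} [IsProbabilityMeasure μ]
    (hT : MeasurePreserving T μ μ) {f : Z → ℝ} (hf : Integrable f μ) {n : ℕ} (hn : 0 < n) {C : ℝ}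
    (h : ∀ᵐ z ∂μ, birkhoffSum T f n z ≤ C) : ∫ z, f z ∂μ ≤ C / n := by
  have hint : Integrable (birkhoffSum T f n) μ :=
    integrable_finsetSum _ fun j _ => (hT.iterate j).integrable_comp_of_integrable hf
  have := integral_mono_ae hint (integrable_const C) h
  rw [integral_birkhoffSum hT hf, integral_const, probReal_univ, one_smul] at this
  rwa [le_div_iff₀' (Nat.cast_pos.2 hn)]

/-- The average of the first `n` images of `μ` under `T`, from which invariant measures are
obtained as weak limits. -/
noncomputable def orbitAverage (hT : Measurable T) (μ : ProbabilityMeasure Z) {n : ℕ}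
    (hn : 0 < n) : ProbabilityMeasure Z :=
  ⟨(n : ENNReal)⁻¹ • ∑ j ∈ Finset.range n, (μ : Measure Z).map T^[j], ⟨by
    have h (j : ℕ) : (μ : Measure Z).map T^[j] Set.univ = 1 := by
      rw [Measure.map_apply (hT.iterate j) MeasurableSet.univ, Set.preimage_univ, measure_univ]
    simp only [Measure.smul_apply, Measure.finsetSum_apply, h, Finset.sum_const,
      Finset.card_range, nsmul_eq_mul, mul_one, smul_eq_mul]
    exact ENNReal.inv_mul_cancel (by exact_mod_cast hn.ne') (ENNReal.natCast_ne_top n)⟩⟩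

lemma orbitAverage_apply (hT : Measurable T) (μ : ProbabilityMeasure Z) {n : ℕ} (hn : 0 < n)
    {E : Set Z} (hE : MeasurableSet E) :
    (orbitAverage hT μ hn : Measure Z) E
      = (n : ENNReal)⁻¹ * ∑ j ∈ Finset.range n, (μ : Measure Z) (T^[j] ⁻¹' E) := by
  simp only [orbitAverage, ProbabilityMeasure.coe_mk, Measure.smul_apply,
    Measure.finsetSum_apply, smul_eq_mul, Measure.map_apply (hT.iterate _) hE]

lemma orbitAverage_apply_eq_of_forall (hT : Measurable T) (μ : ProbabilityMeasure Z) {n : ℕ}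
    (hn : 0 < n) {E : Set Z} (hE : MeasurableSet E) {c : ENNReal}
    (h : ∀ j, (μ : Measure Z) (T^[j] ⁻¹' E) = c) : (orbitAverage hT μ hn : Measure Z) E = c := by
  rw [orbitAverage_apply hT μ hn hE]
  simp only [h, Finset.sum_const, Finset.card_range, nsmul_eq_mul]
  rw [← mul_assoc, ENNReal.inv_mul_cancel (by exact_mod_cast hn.ne') (ENNReal.natCast_ne_top n),
    one_mul]

lemma orbitAverage_eq_self {μ : ProbabilityMeasure Z} (h : MeasurePreserving T (μ : Measure Z) μ)
    {n : ℕ} (hn : 0 < n) : orbitAverage h.measurable μ hn = μ := by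
  refine ProbabilityMeasure.toMeasure_injective (Measure.ext fun E hE => ?_)
  exact orbitAverage_apply_eq_of_forall _ _ _ hE fun j =>
    (h.iterate j).measure_preimage hE.nullMeasurableSet

lemma orbitAverage_apply_eq_one (hT : Measurable T) {μ : ProbabilityMeasure Z} {n : ℕ}
    (hn : 0 < n) {E : Set Z} (hE : MeasurableSet E) (hTE : Set.MapsTo T E E)
    (hμ : (μ : Measure Z) E = 1) : (orbitAverage hT μ hn : Measure Z) E = 1 :=
  orbitAverage_apply_eq_of_forall _ _ _ hE fun j =>
    le_antisymm prob_le_one (hμ.symm.le.trans (measure_mono (hTE.iterate j)))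

lemma map_orbitAverage {W : Type*} [MeasurableSpace W] {S : W → W} (hT : Measurable T)
    (hS : Measurable S) {g : Z → W} (hg : Measurable g) (h : Function.Semiconj g T S)
    (μ : ProbabilityMeasure Z) {n : ℕ} (hn : 0 < n) :
    (orbitAverage hT μ hn).map hg.aemeasurable
      = orbitAverage hS (μ.map hg.aemeasurable) hn := by
  refine ProbabilityMeasure.toMeasure_injective (Measure.ext fun E hE => ?_)
  rw [ProbabilityMeasure.toMeasure_map, Measure.map_apply hg hE, orbitAverage_apply hT μ hn (hg hE),
    orbitAverage_apply hS _ hn hE]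
  refine congrArg _ (Finset.sum_congr rfl fun j _ => ?_)
  rw [ProbabilityMeasure.toMeasure_map, Measure.map_apply hg (hS.iterate j hE),
    ← Set.preimage_comp, ← Set.preimage_comp, (h.iterate_right j).comp_eq]

lemma integral_orbitAverage (hT : Measurable T) (μ : ProbabilityMeasure Z) {n : ℕ} (hn : 0 < n)
    {f : Z → ℝ} (hf : StronglyMeasurable f) {C : ℝ} (hC : ∀ z, ‖f z‖ ≤ C) :
    ∫ z, f z ∂(orbitAverage hT μ hn : Measure Z)
      = (∫ z, birkhoffSum T f n z ∂(μ : Measure Z)) / n := by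
  have hint_map (j : ℕ) : Integrable f ((μ : Measure Z).map T^[j]) :=
    have := Measure.isProbabilityMeasure_map (μ := (μ : Measure Z)) (hT.iterate j).aemeasurable
    .of_bound hf.aestronglyMeasurable C (.of_forall hC)
  have hint_comp (j : ℕ) : Integrable (fun z => f (T^[j] z)) (μ : Measure Z) :=
    (hint_map j).comp_measurable (hT.iterate j)
  simp only [orbitAverage, ProbabilityMeasure.coe_mk, birkhoffSum]
  rw [integral_smul_measure, integral_finsetSum_measure fun j _ => hint_map j,
    integral_finsetSum _ fun j _ => hint_comp j, div_eq_inv_mul]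
  simp only [ENNReal.toReal_inv, ENNReal.toReal_natCast, smul_eq_mul,
    integral_map (hT.iterate _).aemeasurable hf.aestronglyMeasurable]

variable [TopologicalSpace Z] [BorelSpace Z]

lemma abs_integral_comp_sub_integral_orbitAverage_le (hT : Continuous T)
    (μ : ProbabilityMeasure Z) {n : ℕ} (hn : 0 < n) (f : BoundedContinuousFunction Z ℝ) :
    |∫ z, f (T z) ∂(orbitAverage hT.measurable μ hn : Measure Z)
      - ∫ z, f z ∂(orbitAverage hT.measurable μ hn : Measure Z)| ≤ 2 * ‖f‖ / n := by
  have hsum {g : Z → ℝ} (hg : Continuous g) (hgf : ∀ z, ‖g z‖ ≤ ‖f‖) :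
      Integrable (birkhoffSum T g n) (μ : Measure Z) :=
    integrable_finsetSum _ fun j _ =>
      .of_bound (hg.comp (hT.iterate j)).measurable.aestronglyMeasurable ‖f‖
        (.of_forall fun z => hgf _)
  have hbound (z : Z) :
      ‖birkhoffSum T (fun z => f (T z)) n z - birkhoffSum T f n z‖ ≤ 2 * ‖f‖ := by
    have : birkhoffSum T (fun z => f (T z)) n z = birkhoffSum T f n (T z) := by
      simp only [birkhoffSum, ← Function.iterate_succ_apply', Function.iterate_succ_apply]
    rw [this, birkhoffSum_apply_sub_birkhoffSum, two_mul]
    exact (norm_sub_le _ _).trans (add_le_add (f.norm_coe_le_norm _) (f.norm_coe_le_norm _))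
  have hfT : Continuous fun z => f (T z) := f.continuous.comp hT
  rw [integral_orbitAverage _ μ hn hfT.measurable.stronglyMeasurable
      fun z => f.norm_coe_le_norm (T z),
    integral_orbitAverage _ μ hn f.continuous.measurable.stronglyMeasurable f.norm_coe_le_norm,
    ← sub_div, abs_div, Nat.abs_cast,
    ← integral_sub (hsum hfT fun z => f.norm_coe_le_norm _) (hsum f.continuous f.norm_coe_le_norm)]
  gcongr
  simpa using norm_integral_le_of_norm_le_const (μ := (μ : Measure Z)) (.of_forall hbound)

variable [HasOuterApproxClosed Z] {ι : Type*} {l : Filter ι} [NeBot l]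

lemma map_eq_of_tendsto_orbitAverage (hT : Continuous T) {μ : ι → ProbabilityMeasure Z}
    {n : ι → ℕ} (hn : ∀ i, 0 < n i) (hlim : Tendsto n l atTop) {ξ : ProbabilityMeasure Z}
    (h : Tendsto (fun i => orbitAverage hT.measurable (μ i) (hn i)) l (𝓝 ξ)) :
    (ξ : Measure Z).map T = ξ := by
  refine ext_of_forall_integral_eq_of_IsFiniteMeasure fun f => ?_
  rw [integral_map hT.aemeasurable f.continuous.measurable.aestronglyMeasurable]
  have hconv := ProbabilityMeasure.tendsto_iff_forall_integral_tendsto.1 h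
  have hdiff := (hconv (f.compContinuous ⟨T, hT⟩)).sub (hconv f)
  have hzero : Tendsto (fun i => 2 * ‖f‖ / (n i : ℝ)) l (𝓝 0) :=
    (tendsto_const_div_atTop_nhds_zero_nat _).comp hlim
  exact sub_eq_zero.1 (tendsto_nhds_unique hdiff (squeeze_zero_norm
    (fun i => abs_integral_comp_sub_integral_orbitAverage_le hT (μ i) (hn i) f) hzero))

lemma exists_tendsto_orbitAverage [CompactSpace (ProbabilityMeasure Z)] (hT : Continuous T)
    (μ : ℕ → ProbabilityMeasure Z) {n : ℕ → ℕ} (hn : ∀ k, 0 < n k) (hlim : Tendsto n atTop atTop) :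
    ∃ ξ : ProbabilityMeasure Z, (ξ : Measure Z).map T = ξ ∧
      Tendsto (fun k => orbitAverage hT.measurable (μ k) (hn k)) (hyperfilter ℕ) (𝓝 ξ) := by
  let F := (hyperfilter ℕ).map fun k => orbitAverage hT.measurable (μ k) (hn k)
  exact ⟨F.lim, map_eq_of_tendsto_orbitAverage hT hn (hlim.mono_left Nat.hyperfilter_le_atTop)
    F.le_nhds_lim, F.le_nhds_lim⟩

lemma apply_eq_one_of_tendsto {ν : ι → ProbabilityMeasure Z} {ξ : ProbabilityMeasure Z}
    (h : Tendsto ν l (𝓝 ξ)) {F : Set Z} (hF : IsClosed F) (hν : ∀ i, (ν i : Measure Z) F = 1) :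
    (ξ : Measure Z) F = 1 := by
  refine le_antisymm prob_le_one ?_
  simpa only [hν, limsup_const] using
    ProbabilityMeasure.limsup_measure_closed_le_of_tendsto h hF

lemma real_apply_le_of_tendsto {ν : ι → ProbabilityMeasure Z} {ξ : ProbabilityMeasure Z}
    (h : Tendsto ν l (𝓝 ξ)) {E : Set Z} (hE : IsClopen E) {c : ℝ}
    (hν : ∀ i, (ν i : Measure Z).real E ≤ c) : (ξ : Measure Z).real E ≤ c :=
  le_of_tendsto (NNReal.tendsto_coe.2
    (ProbabilityMeasure.tendsto_measure_of_isClopen_of_tendsto h hE)) (.of_forall hν)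

end OrbitAverage

section Joining

variable {α : Type}

lemma shift_iterate_apply (y : ℕ → α) (n j : ℕ) : shift^[n] y j = y (n + j) := by
  induction n generalizing y with
  | zero => rw [Function.iterate_zero_apply, zero_add]
  | succ n ih => rw [Function.iterate_succ_apply, ih, shift, Nat.add_right_comm]

lemma continuous_shift [TopologicalSpace α] : Continuous (shift : (ℕ → α) → ℕ → α) :=
  continuous_pi fun j => continuous_apply (j + 1)

lemma isClopen_setOf_apply_ne [TopologicalSpace α] [DiscreteTopology α] (j : ℕ) :
    IsClopen {q : (ℕ → α) × (ℕ → α) | q.1 j ≠ q.2 j} :=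
  (isClopen_discrete {a : α × α | a.1 ≠ a.2}).preimage
    (f := fun q : (ℕ → α) × (ℕ → α) => (q.1 j, q.2 j)) (by fun_prop)

variable [MeasurableSpace α] {μ ν : ProbabilityMeasure (ℕ → α)}

lemma measurable_shift : Measurable (shift : (ℕ → α) → ℕ → α) :=
  measurable_pi_lambda _ fun j => measurable_pi_apply (j + 1)

lemma mem_Msigma_iff {X : Set (ℕ → α)} :
    μ ∈ Msigma X ↔ invariantPM μ ∧ (μ : Measure (ℕ → α)) X = 1 :=
  and_congr_right fun _ => by
    rw [← ProbabilityMeasure.ennreal_coeFn_eq_coeFn_toMeasure, ENNReal.coe_eq_one]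

lemma dbarM_nonneg (μ ν : ProbabilityMeasure (ℕ → α)) : 0 ≤ dbarM μ ν :=
  Real.sInf_nonneg fun _ ⟨_, _, hr⟩ => hr ▸ ENNReal.toReal_nonneg

lemma dbarM_le_of_isJoining {ξ : Measure ((ℕ → α) × (ℕ → α))} (h : IsJoining ξ μ ν) :
    dbarM μ ν ≤ ξ.real {q | q.1 0 ≠ q.2 0} :=
  csInf_le ⟨0, fun _ ⟨_, _, hr⟩ => hr ▸ ENNReal.toReal_nonneg⟩ ⟨ξ, h, rfl⟩

lemma IsJoining.swap {ξ : Measure ((ℕ → α) × (ℕ → α))} (h : IsJoining ξ μ ν) :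
    IsJoining (ξ.map Prod.swap) ν μ := by
  obtain ⟨hinv, hfst, hsnd⟩ := h
  have hT := (measurable_shift (α := α)).prodMap (measurable_shift (α := α))
  refine ⟨?_, ?_, ?_⟩
  · rw [Measure.map_map hT measurable_swap]
    conv_rhs => rw [← hinv, Measure.map_map measurable_swap hT]
    rfl
  · rw [Measure.map_map measurable_fst measurable_swap, ← hsnd]
    rfl
  · rw [Measure.map_map measurable_snd measurable_swap, ← hfst]
    rfl

lemma dbarM_comm (μ ν : ProbabilityMeasure (ℕ → α)) : dbarM μ ν = dbarM ν μ := by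
  have hswap {μ ν : ProbabilityMeasure (ℕ → α)} {r : ℝ} :
      (∃ ξ, IsJoining ξ μ ν ∧ r = (ξ {q | q.1 0 ≠ q.2 0}).toReal) →
        ∃ ξ, IsJoining ξ ν μ ∧ r = (ξ {q | q.1 0 ≠ q.2 0}).toReal := by
    rintro ⟨ξ, hξ, rfl⟩
    refine ⟨ξ.map Prod.swap, hξ.swap, ?_⟩
    have hpreimage : Prod.swap ⁻¹' {q : (ℕ → α) × (ℕ → α) | q.1 0 ≠ q.2 0}
        = {q | q.1 0 ≠ q.2 0} := Set.ext fun q => ne_comm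
    conv_lhs => rw [← hpreimage]
    exact congrArg ENNReal.toReal (MeasurableEquiv.prodComm.map_apply _).symm
  exact congrArg sInf (Set.ext fun r => ⟨hswap, hswap⟩)

variable [Finite α] [TopologicalSpace α] [DiscreteTopology α] [MeasurableSingletonClass α]

lemma measurable_mismatchCount [DecidableEq α] (n : ℕ) :
    Measurable fun q : (ℕ → α) × (ℕ → α) => (mismatchCount n q.1 q.2 : ℝ) := by
  simp only [mismatchCount, Finset.card_filter, Nat.cast_sum, Nat.cast_ite]
  exact Finset.measurable_sum _ fun j _ => Measurable.ite
    (isClopen_setOf_apply_ne j).isOpen.measurableSet measurable_const measurable_const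

lemma real_orbitAverage_setOf_apply_zero_ne [DecidableEq α]
    (ζ : ProbabilityMeasure ((ℕ → α) × (ℕ → α))) {n : ℕ} (hn : 0 < n) :
    (orbitAverage (measurable_shift.prodMap measurable_shift) ζ hn :
        Measure ((ℕ → α) × (ℕ → α))).real {q | q.1 0 ≠ q.2 0}
      = (∫ q, (mismatchCount n q.1 q.2 : ℝ) ∂(ζ : Measure ((ℕ → α) × (ℕ → α)))) / n := by
  have hE := (isClopen_setOf_apply_ne (α := α) 0).isOpen.measurableSet
  rw [← integral_indicator_one hE, integral_orbitAverage _ ζ hn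
    (stronglyMeasurable_one.indicator hE) fun q => (norm_indicator_le_norm_self _ q).trans
      (norm_one (α := ℝ)).le]
  congr! 3 with q
  simp only [birkhoffSum, Prod.map_iterate, Set.indicator_apply, Set.mem_ofPred_eq, Prod.map_fst,
    Prod.map_snd, shift_iterate_apply, add_zero, Pi.one_apply, mismatchCount, Finset.sum_boole]

theorem exists_mem_Msigma_dbarM_le [DecidableEq α] {Y : Set (ℕ → α)} (hY : IsClosed Y)
    (hYshift : Set.MapsTo shift Y Y) (hμ : invariantPM μ) {n : ℕ → ℕ} (hn : ∀ k, 0 < n k)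
    (hlim : Tendsto n atTop atTop) {π : ℕ → (ℕ → α) → ℕ → α} (hπ : ∀ k, Measurable (π k))
    (hπY : ∀ k y, π k y ∈ Y) {s : ℝ}
    (hs : ∀ k, ∫ y, (mismatchCount (n k) y (π k y) : ℝ) ∂(μ : Measure (ℕ → α)) ≤ n k * s) :
    ∃ ν ∈ Msigma Y, dbarM μ ν ≤ s := by
  have hT : Continuous (Prod.map shift shift : (ℕ → α) × (ℕ → α) → _) :=
    continuous_shift.prodMap continuous_shift
  have hgraph (k : ℕ) : Measurable fun y => (y, π k y) := measurable_id.prodMk (hπ k)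
  let ζ (k : ℕ) : ProbabilityMeasure ((ℕ → α) × (ℕ → α)) := μ.map (hgraph k).aemeasurable
  obtain ⟨ξ, hξinv, hξ⟩ := exists_tendsto_orbitAverage hT ζ hn hlim
  have hfst : ξ.map measurable_fst.aemeasurable = μ := by
    refine tendsto_nhds_unique
      (ProbabilityMeasure.tendsto_map_of_tendsto_of_continuous _ _ hξ continuous_fst)
      (tendsto_const_nhds.congr fun k => ?_)
    have hζ : (ζ k).map measurable_fst.aemeasurable = μ := ProbabilityMeasure.toMeasure_injective
      ((Measure.map_map measurable_fst (hgraph k)).trans Measure.map_id)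
    rw [map_orbitAverage hT.measurable measurable_shift measurable_fst (fun _ => rfl), hζ]
    exact (orbitAverage_eq_self ⟨measurable_shift, hμ⟩ (hn k)).symm
  have hsnd : (ξ : Measure ((ℕ → α) × (ℕ → α))) (Prod.snd ⁻¹' Y) = 1 := by
    refine apply_eq_one_of_tendsto hξ (hY.preimage continuous_snd) fun k =>
      orbitAverage_apply_eq_one _ _ (measurable_snd hY.measurableSet) (fun q hq => hYshift hq) ?_
    rw [ProbabilityMeasure.toMeasure_map, Measure.map_apply (hgraph k)
      (measurable_snd hY.measurableSet)]
    exact (congrArg _ (Set.eq_univ_of_forall (hπY k))).trans measure_univ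
  have hne : (ξ : Measure ((ℕ → α) × (ℕ → α))).real {q | q.1 0 ≠ q.2 0} ≤ s := by
    refine real_apply_le_of_tendsto hξ (isClopen_setOf_apply_ne 0) fun k => ?_
    rw [real_orbitAverage_setOf_apply_zero_ne, ProbabilityMeasure.toMeasure_map,
      integral_map (hgraph k).aemeasurable, div_le_iff₀' (Nat.cast_pos.2 (hn k))]
    · exact hs k
    · exact (measurable_mismatchCount _).aestronglyMeasurable
  have hν : invariantPM (ξ.map measurable_snd.aemeasurable) := by
    rw [invariantPM, ProbabilityMeasure.toMeasure_map, Measure.map_map measurable_shift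
      measurable_snd]
    conv_rhs => rw [← hξinv, Measure.map_map measurable_snd hT.measurable]
    rfl
  exact ⟨_, mem_Msigma_iff.2 ⟨hν, (Measure.map_apply measurable_snd hY.measurableSet).trans hsnd⟩,
    (dbarM_le_of_isJoining ⟨hξinv, congrArg ProbabilityMeasure.toMeasure hfst, rfl⟩).trans hne⟩

end Joining

lemma measurable_of_dependsOn {α β : Type*} [Finite α] [MeasurableSpace α]
    [MeasurableSingletonClass α] [MeasurableSpace β] {s : Set ℕ} (hs : s.Finite)
    {f : (ℕ → α) → β} (h : DependsOn f s) : Measurable f := by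
  have : Finite s := hs
  cases isEmpty_or_nonempty β
  · exact measurable_of_empty_codomain f
  · obtain ⟨g, rfl⟩ := dependsOn_iff_exists_comp.1 h
    exact (measurable_of_finite g).comp (Set.measurable_restrict s)

section Majority

variable {α : Type} [DecidableEq α] [Nonempty α]

/-- A most frequent symbol among the first `n` entries of `y`. -/
noncomputable def majority (n : ℕ) (y : ℕ → α) : α :=
  Function.argmin fun a => mismatchCount n y fun _ => a

/-- The least number of mismatches, among the first `n` entries, between `y` and a constant
sequence. -/
noncomputable def constMismatch (n : ℕ) (y : ℕ → α) : ℕ :=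
  mismatchCount n y fun _ => majority n y

lemma constMismatch_le_mismatchCount_const (n : ℕ) (y : ℕ → α) (a : α) :
    constMismatch n y ≤ mismatchCount n y fun _ => a :=
  Function.argmin_le (fun a => mismatchCount n y fun _ => a) a

lemma constMismatch_le (n : ℕ) (y : ℕ → α) : constMismatch n y ≤ n :=
  mismatchCount_le n y _

lemma dependsOn_majority (n : ℕ) : DependsOn (majority n : (ℕ → α) → α) (Set.Iio n) := by
  intro y y' h
  exact congrArg (fun f : α → ℕ => Function.argmin f)
    (funext fun a => mismatchCount_congr_left h fun _ => a)

lemma dependsOn_constMismatch (n : ℕ) :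
    DependsOn (constMismatch n : (ℕ → α) → ℕ) (Set.Iio n) := by
  intro y y' h
  rw [constMismatch, constMismatch, dependsOn_majority n h]
  exact mismatchCount_congr_left h _

variable [Finite α] [TopologicalSpace α] [DiscreteTopology α] [MeasurableSpace α]
  [MeasurableSingletonClass α]

theorem exists_mem_Msigma_range_const_dbarM_le {μ : ProbabilityMeasure (ℕ → α)}
    (hμ : invariantPM μ) {s : ℝ}
    (h : ∀ n, 0 < n → ∫ y, (constMismatch n y : ℝ) ∂(μ : Measure (ℕ → α)) ≤ n * s) :
    ∃ ν ∈ Msigma (Set.range (Function.const ℕ : α → ℕ → α)), dbarM μ ν ≤ s := by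
  refine exists_mem_Msigma_dbarM_le (π := fun k y _ => majority (k + 1) y)
    (Set.finite_range _).isClosed ?_ hμ Nat.succ_pos (tendsto_add_atTop_nat 1)
    (fun k => measurable_pi_lambda _ fun _ =>
      measurable_of_dependsOn (Set.finite_Iio _) (dependsOn_majority (k + 1)))
    (fun k y => ⟨majority (k + 1) y, rfl⟩) fun k => h (k + 1) k.succ_pos
  rintro _ ⟨a, rfl⟩
  exact ⟨a, rfl⟩

end Majority

section PeriodicCount

variable {q : ℕ → Prop} [DecidablePred q] {a : ℕ}

lemma count_mul_of_periodic (hq : Function.Periodic q a) (t : ℕ) :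
    Nat.count q (t * a) = t * Nat.count q a := by
  induction t with
  | zero => simp only [zero_mul, Nat.count_zero]
  | succ t ih =>
    have hshift : (fun k => q (t * a + k)) = q := funext fun k => by
      rw [add_comm, ← smul_eq_mul, hq.nsmul t k]
    simp only [add_mul, one_mul, Nat.count_add, ih, hshift]

lemma count_add_left_of_periodic (hq : Function.Periodic q a) (m : ℕ) :
    Nat.count (fun j => q (m + j)) a = Nat.count q a := by
  have hshift : (fun k => q (a + k)) = q := funext fun k => by rw [add_comm, hq]
  have h₁ := Nat.count_add q m a
  have h₂ := Nat.count_add q a m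
  simp only [hshift, add_comm a m] at h₂
  omega

lemma count_add_left_mul_of_periodic (hq : Function.Periodic q a) (m t : ℕ) :
    Nat.count (fun j => q (m + j)) (t * a) = t * Nat.count q a := by
  rw [count_mul_of_periodic (fun j => by rw [← add_assoc, hq]),
    count_add_left_of_periodic hq]

lemma count_dvd_div_or_dvd_div_add_one_le {P : ℕ} (hP : 0 < P) (r : ℕ) :
    Nat.count (fun i => r ∣ i / P ∨ r ∣ i / P + 1) (r * P) ≤ 2 * P := by
  rw [Nat.count_eq_card_filter_range]
  have hsub : {i ∈ Finset.range (r * P) | r ∣ i / P ∨ r ∣ i / P + 1}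
      ⊆ Finset.range P ∪ Finset.Ico (r * P - P) (r * P) := by
    intro i hi
    obtain ⟨hi, h⟩ := Finset.mem_filter.1 hi
    have hi := Finset.mem_range.1 hi
    have hlt : i / P < r := Nat.div_lt_of_lt_mul (by rwa [mul_comm])
    rcases h with h | h
    · exact Finset.mem_union_left _ (Finset.mem_range.2
        ((Nat.div_eq_zero_iff_lt hP).1 (Nat.eq_zero_of_dvd_of_lt h hlt)))
    · have hle : r * P ≤ (i / P + 1) * P :=
        Nat.mul_le_mul_right P (Nat.le_of_dvd (Nat.succ_pos _) h)
      have hdiv := Nat.div_mul_le_self i P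
      rw [add_mul, one_mul] at hle
      exact Finset.mem_union_right _ (Finset.mem_Ico.2 ⟨by omega, hi⟩)
  calc _ ≤ _ := Finset.card_le_card hsub
    _ ≤ _ := Finset.card_union_le _ _
    _ ≤ 2 * P := by rw [Finset.card_range, Nat.card_Ico]; omega

end PeriodicCount

section Oxtoby

variable {p : ℕ → ℕ}

lemma scale_dvd_of_le (hdvd : ∀ k, p k ∣ p (k + 1)) {K k : ℕ} (h : K ≤ k) : p K ∣ p k :=
  Nat.le_induction (dvd_refl _) (fun k _ ih => ih.trans (hdvd k)) k h

lemma mem_oxtobyM_succ_iff {i k r : ℕ} (hP : 0 < p (k + 1)) (hr : p (k + 2) = r * p (k + 1)) :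
    i ∈ oxtobyM p (k + 1) ↔ r ∣ i / p (k + 1) ∨ r ∣ i / p (k + 1) + 1 := by
  have hmem : i ∈ oxtobyM p (k + 1) ↔ ∃ m, m * r ≤ i / p (k + 1) + 1 ∧ i / p (k + 1) ≤ m * r := by
    rw [oxtobyM, if_neg k.succ_ne_zero]
    refine exists_congr fun m => ?_
    rw [← Nat.add_div_right i hP, Nat.le_div_iff_mul_le hP, ← Nat.lt_add_one_iff (n := m * r),
      Nat.div_lt_iff_lt_mul hP, add_mul, one_mul, mul_assoc, ← hr]
    zify
    constructor <;> rintro ⟨h₁, h₂⟩ <;> constructor <;> linarith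
  rw [hmem]
  constructor
  · rintro ⟨m, h₁, h₂⟩
    rcases h₂.eq_or_lt with h | h
    · exact .inl (h ▸ dvd_mul_left r m)
    · exact .inr (le_antisymm h₁ h ▸ dvd_mul_left r m)
  · rintro (⟨m, h⟩ | ⟨m, h⟩) <;> exact ⟨m, by rw [mul_comm, ← h]; omega⟩

lemma mem_oxtobyM_of_lt {i k : ℕ} (h : i < p (k + 1)) : i ∈ oxtobyM p (k + 1) := by
  rw [oxtobyM, if_neg k.succ_ne_zero]
  exact ⟨0, by push_cast; omega⟩

/-- The least `k` with `i ∈ M_k`, denoted `k(i)` in the construction of the Oxtoby sequence. It is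
meaningful when `p` is unbounded, so that such a `k` exists. -/
noncomputable def level (p : ℕ → ℕ) (i : ℕ) : ℕ :=
  sInf {k | i ∈ oxtobyM p k}

lemma oxtoby_apply (p : ℕ → ℕ) (i : ℕ) : oxtoby p i = (level p i).bodd := by
  have h : level p i % 2 = (level p i).bodd.toNat := Nat.mod_two_of_bodd _
  change decide (level p i % 2 = 1) = _
  rw [h]
  cases (level p i).bodd <;> rfl

lemma mem_oxtobyM_level (hlim : Tendsto p atTop atTop) (i : ℕ) : i ∈ oxtobyM p (level p i) := by
  obtain ⟨k, hk⟩ :=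
    (((tendsto_add_atTop_iff_nat 1).2 hlim).eventually_gt_atTop i).exists
  exact Nat.sInf_mem (s := {k | i ∈ oxtobyM p k}) ⟨k + 1, mem_oxtobyM_of_lt hk⟩

lemma exists_level_eq_succ (hlim : Tendsto p atTop atTop) (i : ℕ) : ∃ k, level p i = k + 1 := by
  refine Nat.exists_eq_succ_of_ne_zero fun h => ?_
  have := mem_oxtobyM_level hlim i
  rw [h, oxtobyM, if_pos rfl] at this
  exact this

lemma level_eq_of_mem {i L : ℕ} (hL : L < level p i) (h : i ∈ oxtobyM p (L + 1)) :
    level p i = L + 1 :=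
  le_antisymm (Nat.sInf_le h) hL

lemma level_le_of_div_eq (hpos : ∀ k, 0 < p k) (hdvd : ∀ k, p k ∣ p (k + 1))
    (hlim : Tendsto p atTop atTop) {i j L : ℕ} (hj : L < level p j)
    (hij : i / p (L + 1) = j / p (L + 1)) : level p i ≤ level p j := by
  have hmem := mem_oxtobyM_level hlim j
  obtain ⟨k, hk⟩ := exists_level_eq_succ hlim j
  rw [hk] at hj hmem ⊢
  obtain ⟨t, ht⟩ := scale_dvd_of_le hdvd (Nat.succ_le_of_lt hj)
  have hdiv : i / p (k + 1) = j / p (k + 1) := by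
    rw [ht, ← Nat.div_div_eq_div_mul, ← Nat.div_div_eq_div_mul, hij]
  obtain ⟨r, hr⟩ := exists_eq_mul_left_of_dvd (hdvd (k + 1))
  rw [mem_oxtobyM_succ_iff (hpos _) hr, ← hdiv, ← mem_oxtobyM_succ_iff (hpos _) hr] at hmem
  exact Nat.sInf_le hmem

lemma level_eq_of_div_eq (hpos : ∀ k, 0 < p k) (hdvd : ∀ k, p k ∣ p (k + 1))
    (hlim : Tendsto p atTop atTop) {i j L : ℕ} (hi : L < level p i) (hj : L < level p j)
    (hij : i / p (L + 1) = j / p (L + 1)) : level p i = level p j :=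
  le_antisymm (level_le_of_div_eq hpos hdvd hlim hj hij)
    (level_le_of_div_eq hpos hdvd hlim hi hij.symm)

/-- The sum of the densities `2 * p (k + 1) / p (k + 2)` of the sets `M_{k + 1}` with `k < L`. -/
noncomputable def lowDensity (p : ℕ → ℕ) (L : ℕ) : ℝ :=
  ∑ k ∈ Finset.range L, (2 * p (k + 1) : ℝ) / p (k + 2)

/-- The number of positions of level at most `L` in the window `[m, m + n)`. -/
noncomputable def lowCount (p : ℕ → ℕ) (L m n : ℕ) : ℕ :=
  Nat.count (fun j => level p (m + j) ≤ L) n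

lemma count_oxtobyM_le (hpos : ∀ k, 0 < p k) (hdvd : ∀ k, p k ∣ p (k + 1)) (k m : ℕ) {N : ℕ}
    (hN : p (k + 2) ∣ N) [DecidablePred (· ∈ oxtobyM p (k + 1))] :
    (Nat.count (fun j => m + j ∈ oxtobyM p (k + 1)) N : ℝ)
      ≤ N * ((2 * p (k + 1) : ℝ) / p (k + 2)) := by
  have hP := hpos (k + 1)
  obtain ⟨r, hr⟩ := exists_eq_mul_left_of_dvd (hdvd (k + 1))
  have hmem (i : ℕ) := mem_oxtobyM_succ_iff (i := i) hP hr
  have hper : Function.Periodic (fun i => i ∈ oxtobyM p (k + 1)) (p (k + 2)) := fun i => by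
    simp only [hmem, hr]
    rw [Nat.add_mul_div_right _ _ hP, add_right_comm, Nat.dvd_add_self_right,
      Nat.dvd_add_self_right]
  obtain ⟨t, rfl⟩ := exists_eq_mul_left_of_dvd hN
  have hcount : Nat.count (fun i => i ∈ oxtobyM p (k + 1)) (p (k + 2)) ≤ 2 * p (k + 1) := by
    simp only [hmem]
    rw [hr]
    exact count_dvd_div_or_dvd_div_add_one_le hP r
  rw [count_add_left_mul_of_periodic hper, Nat.cast_mul, Nat.cast_mul, mul_assoc,
    mul_div_cancel₀ _ (Nat.cast_ne_zero.2 (hpos (k + 2)).ne')]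
  gcongr
  exact_mod_cast hcount

lemma lowCount_le (hpos : ∀ k, 0 < p k) (hdvd : ∀ k, p k ∣ p (k + 1))
    (hlim : Tendsto p atTop atTop) (L m : ℕ) {N : ℕ} (hN : p (L + 1) ∣ N) :
    (lowCount p L m N : ℝ) ≤ N * lowDensity p L := by
  classical
  have hle : lowCount p L m N
      ≤ ∑ k ∈ Finset.range L, Nat.count (fun j => m + j ∈ oxtobyM p (k + 1)) N := by
    simp only [lowCount, Nat.count_eq_card_filter_range]
    refine le_trans (Finset.card_le_card fun j hj => ?_) Finset.card_biUnion_le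
    obtain ⟨hj, hlevel⟩ := Finset.mem_filter.1 hj
    have hmem := mem_oxtobyM_level hlim (m + j)
    obtain ⟨k, hk⟩ := exists_level_eq_succ hlim (m + j)
    rw [hk] at hmem hlevel
    exact Finset.mem_biUnion.2
      ⟨k, Finset.mem_range.2 hlevel, Finset.mem_filter.2 ⟨hj, hmem⟩⟩
  calc (lowCount p L m N : ℝ)
      ≤ ∑ k ∈ Finset.range L, (Nat.count (fun j => m + j ∈ oxtobyM p (k + 1)) N : ℝ) := by
        exact_mod_cast hle
    _ ≤ ∑ k ∈ Finset.range L, N * ((2 * p (k + 1) : ℝ) / p (k + 2)) := by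
        exact Finset.sum_le_sum fun k hk => count_oxtobyM_le hpos hdvd k m ((scale_dvd_of_le hdvd
          (Nat.succ_le_succ (Finset.mem_range.1 hk))).trans hN)
    _ = N * lowDensity p L := (Finset.mul_sum _ _ _).symm

lemma mismatchCount_shift_oxtoby_le_lowCount {L m n : ℕ} {c : Bool}
    (h : ∀ j < n, L < level p (m + j) → oxtoby p (m + j) = c) :
    mismatchCount n (shift^[m] (oxtoby p)) (fun _ => c) ≤ lowCount p L m n := by
  simp only [mismatchCount, shift_iterate_apply, lowCount, Nat.count_eq_card_filter_range]
  refine Finset.card_le_card fun j hj => ?_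
  obtain ⟨hj, hne⟩ := Finset.mem_filter.1 hj
  exact Finset.mem_filter.2
    ⟨hj, not_lt.1 fun hL => hne (h j (Finset.mem_range.1 hj) hL)⟩

lemma constMismatch_shift_oxtoby_le_lowCount (hpos : ∀ k, 0 < p k)
    (hdvd : ∀ k, p k ∣ p (k + 1)) (hlim : Tendsto p atTop atTop) {L m n : ℕ}
    (h : m % p (L + 1) + n ≤ p (L + 1)) :
    constMismatch n (shift^[m] (oxtoby p)) ≤ lowCount p L m n := by
  have hblock (j : ℕ) (hj : j < n) : (m + j) / p (L + 1) = m / p (L + 1) := by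
    conv_lhs => rw [← Nat.div_add_mod m (p (L + 1)), add_assoc]
    rw [Nat.mul_add_div (hpos _),
      Nat.div_eq_of_lt (show m % p (L + 1) + j < p (L + 1) by omega), add_zero]
  by_cases hex : ∃ j < n, L < level p (m + j)
  · obtain ⟨j, hj, hL⟩ := hex
    refine (constMismatch_le_mismatchCount_const n _ (oxtoby p (m + j))).trans
      (mismatchCount_shift_oxtoby_le_lowCount fun i hi hLi => ?_)
    rw [oxtoby_apply, oxtoby_apply, level_eq_of_div_eq hpos hdvd hlim hLi hL
      ((hblock i hi).trans (hblock j hj).symm)]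
  · exact (constMismatch_le_mismatchCount_const n _ false).trans
      (mismatchCount_shift_oxtoby_le_lowCount fun i hi hLi => (hex ⟨i, hi, hLi⟩).elim)

lemma sum_lowCount_comm (p : ℕ → ℕ) (L m n N : ℕ) :
    ∑ j ∈ Finset.range N, lowCount p L (m + j) n
      = ∑ t ∈ Finset.range n, lowCount p L (m + t) N := by
  simp only [lowCount, Nat.count_eq_card_filter_range, Finset.card_filter]
  rw [Finset.sum_comm]
  simp only [add_right_comm]

lemma count_lt_mod_add_le (P m n : ℕ) : Nat.count (fun j => P < (m + j) % P + n) P ≤ n := by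
  have hper : Function.Periodic (fun j => P < j % P + n) P := fun j => by
    simp only [Nat.add_mod_right]
  rw [count_add_left_of_periodic hper, Nat.count_eq_card_filter_range]
  calc _ ≤ (Finset.Ico (P - n) P).card := Finset.card_le_card fun j hj => by
        obtain ⟨hj, h⟩ := Finset.mem_filter.1 hj
        rw [Nat.mod_eq_of_lt (Finset.mem_range.1 hj)] at h
        exact Finset.mem_Ico.2 ⟨by omega, Finset.mem_range.1 hj⟩
    _ ≤ n := by rw [Nat.card_Ico]; omega

lemma sum_constMismatch_shift_oxtoby_le (hpos : ∀ k, 0 < p k) (hdvd : ∀ k, p k ∣ p (k + 1))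
    (hlim : Tendsto p atTop atTop) (L m n : ℕ) :
    ∑ j ∈ Finset.range (p (L + 1)), (constMismatch n (shift^[m + j] (oxtoby p)) : ℝ)
      ≤ n * (p (L + 1) * lowDensity p L) + n * n := by
  set P := p (L + 1)
  have hterm (j : ℕ) : constMismatch n (shift^[m + j] (oxtoby p))
      ≤ lowCount p L (m + j) n + n * if P < (m + j) % P + n then 1 else 0 := by
    split_ifs with h
    · rw [mul_one]
      exact le_add_left (constMismatch_le n _)
    · exact (constMismatch_shift_oxtoby_le_lowCount hpos hdvd hlim (not_lt.1 h)).trans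
        (Nat.le_add_right _ _)
  have hsum : ∑ j ∈ Finset.range P, constMismatch n (shift^[m + j] (oxtoby p))
      ≤ ∑ t ∈ Finset.range n, lowCount p L (m + t) P + n * n := by
    refine (Finset.sum_le_sum fun j _ => hterm j).trans ?_
    rw [Finset.sum_add_distrib, sum_lowCount_comm, ← Finset.mul_sum, ← Finset.card_filter,
      ← Nat.count_eq_card_filter_range]
    gcongr
    exact count_lt_mod_add_le P m n
  calc _ ≤ ∑ t ∈ Finset.range n, (lowCount p L (m + t) P : ℝ) + n * n := by exact_mod_cast hsum
    _ ≤ ∑ _t ∈ Finset.range n, (P * lowDensity p L : ℝ) + n * n := by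
        gcongr
        exact lowCount_le hpos hdvd hlim L _ dvd_rfl
    _ = n * (P * lowDensity p L) + n * n := by
        rw [Finset.sum_const, Finset.card_range, nsmul_eq_mul]

lemma exists_eq_shift_oxtoby {y : ℕ → Bool} (hy : y ∈ oxtobyShift p) (N : ℕ) :
    ∃ m, ∀ j < N, y j = shift^[m] (oxtoby p) j := by
  have hopen : IsOpen ((Set.Iio N).pi fun j => {y j}) :=
    isOpen_set_pi (Set.finite_Iio N) fun _ _ => isOpen_discrete _
  obtain ⟨_, hz, m, rfl⟩ := mem_closure_iff.1 hy _ hopen fun _ _ => rfl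
  exact ⟨m, fun j hj => (hz j hj).symm⟩

lemma birkhoffSum_constMismatch_le (hpos : ∀ k, 0 < p k) (hdvd : ∀ k, p k ∣ p (k + 1))
    (hlim : Tendsto p atTop atTop) {y : ℕ → Bool} (hy : y ∈ oxtobyShift p) (L n : ℕ) :
    birkhoffSum shift (fun y => (constMismatch n y : ℝ)) (p (L + 1)) y
      ≤ n * (p (L + 1) * lowDensity p L) + n * n := by
  obtain ⟨m, hm⟩ := exists_eq_shift_oxtoby hy (p (L + 1) + n)
  refine le_trans (Finset.sum_le_sum fun j hj => le_of_eq ?_)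
    (sum_constMismatch_shift_oxtoby_le hpos hdvd hlim L m n)
  refine congrArg _ (dependsOn_constMismatch n fun i hi => ?_)
  have hj := Finset.mem_range.1 hj
  have hi := Set.mem_Iio.1 hi
  rw [shift_iterate_apply, hm _ (by omega), shift_iterate_apply, shift_iterate_apply, add_assoc]

theorem integral_constMismatch_le (hpos : ∀ k, 0 < p k) (hdvd : ∀ k, p k ∣ p (k + 1))
    (hlim : Tendsto p atTop atTop) {s : ℝ} (hs : ∀ L, lowDensity p L ≤ s)
    {μ : ProbabilityMeasure (ℕ → Bool)} (hμ : μ ∈ Msigma (oxtobyShift p)) (n : ℕ) :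
    ∫ y, (constMismatch n y : ℝ) ∂(μ : Measure (ℕ → Bool)) ≤ n * s := by
  obtain ⟨hinv, hsupp⟩ := mem_Msigma_iff.1 hμ
  have hint : Integrable (fun y : ℕ → Bool => (constMismatch n y : ℝ))
      (μ : Measure (ℕ → Bool)) := by
    refine .of_bound (measurable_of_dependsOn (Set.finite_Iio n) fun y z h =>
      congrArg _ (dependsOn_constMismatch n h)).aestronglyMeasurable n (.of_forall fun y => ?_)
    rw [Real.norm_natCast]
    exact_mod_cast constMismatch_le n y
  have hae : ∀ᵐ y ∂(μ : Measure (ℕ → Bool)), y ∈ oxtobyShift p :=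
    (prob_compl_eq_zero_iff isClosed_closure.measurableSet).2 hsupp
  have hle (L : ℕ) : ∫ y, (constMismatch n y : ℝ) ∂(μ : Measure (ℕ → Bool))
      ≤ n * s + n * n / p (L + 1) := by
    have hP : (0 : ℝ) < p (L + 1) := Nat.cast_pos.2 (hpos _)
    calc _ ≤ (n * (p (L + 1) * lowDensity p L) + n * n) / p (L + 1) :=
          integral_le_of_ae_birkhoffSum_le ⟨measurable_shift, hinv⟩ hint (hpos _)
            (hae.mono fun y hy => birkhoffSum_constMismatch_le hpos hdvd hlim hy L n)
      _ = n * lowDensity p L + n * n / p (L + 1) := by field_simp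
      _ ≤ n * s + n * n / p (L + 1) := by gcongr; exact hs L
  have htendsto : Tendsto (fun L => n * s + n * n / (p (L + 1) : ℝ)) atTop (𝓝 (n * s + 0)) :=
    tendsto_const_nhds.add (tendsto_const_nhds.div_atTop
      (tendsto_natCast_atTop_atTop.comp ((tendsto_add_atTop_iff_nat 1).2 hlim)))
  simpa only [add_zero] using ge_of_tendsto' htendsto hle

lemma mismatchCount_oxtoby_le (hpos : ∀ k, 0 < p k) (hdvd : ∀ k, p k ∣ p (k + 1))
    (hlim : Tendsto p atTop atTop) (L : ℕ) :
    (mismatchCount (p (L + 1)) (oxtoby p) (fun _ => (L + 1).bodd) : ℝ)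
      ≤ p (L + 1) * lowDensity p L := by
  refine le_trans (Nat.cast_le.2
    (mismatchCount_shift_oxtoby_le_lowCount (m := 0) fun j hj hL => ?_))
    (lowCount_le hpos hdvd hlim L 0 dvd_rfl)
  rw [zero_add] at hL ⊢
  rw [oxtoby_apply, level_eq_of_mem hL (mem_oxtobyM_of_lt hj)]

lemma mismatchCount_shift_oxtoby_le (hpos : ∀ k, 0 < p k) (hdvd : ∀ k, p k ∣ p (k + 1))
    (hlim : Tendsto p atTop atTop) {L : ℕ} (h3 : 3 * p (L + 1) ≤ p (L + 2)) :
    (mismatchCount (p (L + 1)) (shift^[p (L + 1)] (oxtoby p)) (fun _ => (L + 2).bodd) : ℝ)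
      ≤ p (L + 1) * lowDensity p L := by
  refine le_trans (Nat.cast_le.2 (mismatchCount_shift_oxtoby_le_lowCount fun j hj hL => ?_))
    (lowCount_le hpos hdvd hlim L (p (L + 1)) dvd_rfl)
  have hP := hpos (L + 1)
  obtain ⟨r, hr⟩ := exists_eq_mul_left_of_dvd (hdvd (L + 1))
  have hr3 : 3 ≤ r := Nat.le_of_mul_le_mul_right (h3.trans_eq hr) hP
  have hnot : p (L + 1) + j ∉ oxtobyM p (L + 1) := by
    rw [mem_oxtobyM_succ_iff hP hr, Nat.add_div_left j hP, Nat.div_eq_of_lt hj]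
    rintro (h | h) <;> have := Nat.le_of_dvd (by norm_num) h <;> omega
  have hmem := mem_oxtobyM_level hlim (p (L + 1) + j)
  have hL' : L + 1 < level p (p (L + 1) + j) :=
    lt_of_le_of_ne hL fun h => hnot (by rwa [← h] at hmem)
  rw [oxtoby_apply, level_eq_of_mem hL' (mem_oxtobyM_of_lt (show _ < p (L + 2) by omega))]

lemma exists_mismatchCount_shift_oxtoby_le (hpos : ∀ k, 0 < p k) (hdvd : ∀ k, p k ∣ p (k + 1))
    (hlim : Tendsto p atTop atTop) {L : ℕ} (h3 : 3 * p (L + 1) ≤ p (L + 2)) (c : Bool) :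
    ∃ m, (mismatchCount (p (L + 1)) (shift^[m] (oxtoby p)) (fun _ => c) : ℝ)
      ≤ p (L + 1) * lowDensity p L := by
  by_cases hc : c = (L + 1).bodd
  · exact ⟨0, hc ▸ mismatchCount_oxtoby_le hpos hdvd hlim L⟩
  · have hc : c = (L + 2).bodd := by
      rw [Nat.bodd_succ]
      exact Bool.eq_not_of_ne hc
    exact ⟨p (L + 1), hc ▸ mismatchCount_shift_oxtoby_le hpos hdvd hlim h3⟩

lemma shift_iterate_oxtoby_mem (p : ℕ → ℕ) (m : ℕ) : shift^[m] (oxtoby p) ∈ oxtobyShift p :=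
  subset_closure ⟨m, rfl⟩

lemma mapsTo_shift_oxtobyShift (p : ℕ → ℕ) :
    Set.MapsTo shift (oxtobyShift p) (oxtobyShift p) := by
  refine Set.MapsTo.closure ?_ continuous_shift
  rintro _ ⟨m, rfl⟩
  exact ⟨m + 1, (Function.iterate_succ_apply' shift m _).symm⟩

lemma one_sub_le_dbar_oxtoby_const (hpos : ∀ k, 0 < p k) (hdvd : ∀ k, p k ∣ p (k + 1))
    (hlim : Tendsto p atTop atTop) {s : ℝ} (hs : ∀ L, lowDensity p L ≤ s) (c : Bool) :
    1 - s ≤ dbar (oxtoby p) (fun _ => c) := by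
  refine frequently_le_dbar (((tendsto_add_atTop_iff_nat 1).2 hlim).frequently
    (Frequently.mono (p := fun L => (L + 1).bodd = !c) ?_ fun L hL => ?_))
  · refine frequently_atTop.2 fun N => ?_
    by_cases h : (N + 1).bodd = !c
    · exact ⟨N, le_rfl, h⟩
    · refine ⟨N + 1, N.le_succ, ?_⟩
      rw [Nat.bodd_succ, Bool.eq_not_of_ne h, Bool.not_not]
  · have hP : (0 : ℝ) < p (L + 1) := Nat.cast_pos.2 (hpos _)
    have hle := mismatchCount_oxtoby_le hpos hdvd hlim L
    have hlow := mul_le_mul_of_nonneg_left (hs L) hP.le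
    have hadd : (mismatchCount (p (L + 1)) (oxtoby p) (fun _ => c) : ℝ)
        + mismatchCount (p (L + 1)) (oxtoby p) (fun _ => !c) = p (L + 1) := by
      exact_mod_cast mismatchCount_add_mismatchCount_not (p (L + 1)) (oxtoby p) c
    rw [hL] at hle
    rw [le_div_iff₀ hP]
    linarith

theorem exists_mem_Msigma_oxtobyShift_dbarM_le (hpos : ∀ k, 0 < p k)
    (hdvd : ∀ k, p k ∣ p (k + 1)) (hlim : Tendsto p atTop atTop)
    (h3 : ∀ᶠ L in atTop, 3 * p (L + 1) ≤ p (L + 2)) {s : ℝ} (hs : ∀ L, lowDensity p L ≤ s)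
    {ν : ProbabilityMeasure (ℕ → Bool)}
    (hν : ν ∈ Msigma (Set.range (Function.const ℕ : Bool → ℕ → Bool))) :
    ∃ μ ∈ Msigma (oxtobyShift p), dbarM ν μ ≤ s := by
  obtain ⟨hinv, hsupp⟩ := mem_Msigma_iff.1 hν
  obtain ⟨K, hK⟩ := eventually_atTop.1 h3
  choose m hm using fun k => exists_mismatchCount_shift_oxtoby_le hpos hdvd hlim
    (hK (k + K) (Nat.le_add_left K k))
  have hae : ∀ᵐ y ∂(ν : Measure (ℕ → Bool)), y ∈ Set.range (Function.const ℕ : Bool → ℕ → Bool) :=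
    (prob_compl_eq_zero_iff (Set.finite_range _).measurableSet).2 hsupp
  refine exists_mem_Msigma_dbarM_le (n := fun k => p (k + K + 1))
    (π := fun k y => shift^[m k (y 0)] (oxtoby p)) isClosed_closure (mapsTo_shift_oxtobyShift p)
    hinv (fun k => hpos _) ((tendsto_add_atTop_iff_nat (K + 1)).2 hlim)
    (fun k => (measurable_of_finite fun c => shift^[m k c] (oxtoby p)).comp (measurable_pi_apply 0))
    (fun k y => shift_iterate_oxtoby_mem p _) fun k => ?_
  have hle : ∀ᵐ y ∂(ν : Measure (ℕ → Bool)),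
      (mismatchCount (p (k + K + 1)) y (shift^[m k (y 0)] (oxtoby p)) : ℝ) ≤ p (k + K + 1) * s := by
    filter_upwards [hae] with y hy
    obtain ⟨c, rfl⟩ := hy
    rw [mismatchCount_comm]
    exact (hm k c).trans (mul_le_mul_of_nonneg_left (hs _) (Nat.cast_nonneg _))
  refine (integral_mono_of_nonneg (.of_forall fun y => Nat.cast_nonneg _) (integrable_const _)
    hle).trans_eq ?_
  rw [integral_const, probReal_univ, one_smul]

lemma eventually_three_mul_le (hpos : ∀ k, 0 < p k)
    (hsummable : Summable fun k : ℕ => (2 * p (k + 1) : ℝ) / p (k + 2)) :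
    ∀ᶠ L in atTop, 3 * p (L + 1) ≤ p (L + 2) := by
  filter_upwards [hsummable.tendsto_atTop_zero.eventually_lt_const
    (show (0 : ℝ) < 2 / 3 by norm_num)] with L hL
  rw [div_lt_div_iff₀ (Nat.cast_pos.2 (hpos _)) three_pos] at hL
  have hle : (3 * p (L + 1) : ℝ) ≤ p (L + 2) := by linarith
  exact_mod_cast hle

lemma tendsto_atTop_of_eventually_three_mul_le (hpos : ∀ k, 0 < p k)
    (h3 : ∀ᶠ L in atTop, 3 * p (L + 1) ≤ p (L + 2)) : Tendsto p atTop atTop := by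
  obtain ⟨K, hK⟩ := eventually_atTop.1 h3
  refine (tendsto_add_atTop_iff_nat (K + 1)).1 (StrictMono.tendsto_atTop
    (strictMono_nat_of_lt_succ fun k => ?_))
  have hK' := hK (k + K) (Nat.le_add_left K k)
  have hP := hpos (k + K + 1)
  rw [show k + 1 + (K + 1) = k + K + 2 by ring, ← add_assoc]
  omega

end Oxtoby

theorem statement10_general (p : ℕ → ℕ) (hpos : ∀ k, 0 < p k) (hdvd : ∀ k, p k ∣ p (k + 1))
    (hsummable : Summable (fun k : ℕ => (2 * p (k + 1) : ℝ) / (p (k + 2) : ℝ))) :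
    1 - ∑' k : ℕ, (2 * p (k + 1) : ℝ) / (p (k + 2) : ℝ) ≤ hausdist dbar (oxtobyShift p)
        ({fun _ => false, fun _ => true} : Set (ℕ → Bool)) ∧
    hausdist dbarM (Msigma (oxtobyShift p))
        (Msigma ({fun _ => false, fun _ => true} : Set (ℕ → Bool)))
      ≤ ∑' k : ℕ, (2 * p (k + 1) : ℝ) / (p (k + 2) : ℝ) := by
  have h3 := eventually_three_mul_le hpos hsummable
  have hlim := tendsto_atTop_of_eventually_three_mul_le hpos h3
  have hlow (L : ℕ) : lowDensity p L ≤ ∑' k : ℕ, (2 * p (k + 1) : ℝ) / (p (k + 2) : ℝ) :=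
    hsummable.sum_le_tsum _ fun k _ => by positivity
  have hconst : ({fun _ => false, fun _ => true} : Set (ℕ → Bool))
      = Set.range (Function.const ℕ) := by
    rw [← Set.image_univ, Bool.univ_eq, Set.image_pair]
    rfl
  rw [hconst]
  constructor
  · refine le_hausdist dbar_nonneg dbar_le_one (Set.range_nonempty _)
      (shift_iterate_oxtoby_mem p 0) ?_
    rintro _ ⟨c, rfl⟩
    exact one_sub_le_dbar_oxtoby_const hpos hdvd hlim hlow c
  · refine hausdist_le dbarM_nonneg (tsum_nonneg fun k => by positivity) (fun μ hμ => ?_)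
      fun ν hν => ?_
    · exact exists_mem_Msigma_range_const_dbarM_le (mem_Msigma_iff.1 hμ).1 fun n _ =>
        integral_constMismatch_le hpos hdvd hlim hlow hμ n
    · obtain ⟨μ, hμ, hle⟩ := exists_mem_Msigma_oxtobyShift_dbarM_le hpos hdvd hlim h3 hlow hν
      exact ⟨μ, hμ, dbarM_comm ν μ ▸ hle⟩

/-- for a scale `p` with `Σ 2p_k/p_{k+1} < δ < 1/2`, the Oxtoby shift
`X(p)` is `d̄^H`-far from `{0^∞, 1^∞}` but `d̄_M^H`-close to it. -/
theorem statement10 (δ : ℝ) (hδ0 : 0 < δ) (hδhalf : δ < 1 / 2)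
    (p : ℕ → ℕ) (hp0 : p 0 = 1) (hpos : ∀ k, 0 < p k)
    (hdvd : ∀ k, p k ∣ p (k + 1)) (hratio : ∀ k, 3 * p k ≤ p (k + 1))
    (hsummable : Summable (fun k : ℕ => (2 * p (k + 1) : ℝ) / (p (k + 2) : ℝ)))
    (hsum : ∑' k : ℕ, (2 * p (k + 1) : ℝ) / (p (k + 2) : ℝ) < δ) :
    1 - δ < hausdist dbar (oxtobyShift p)
        ({fun _ => false, fun _ => true} : Set (ℕ → Bool)) ∧
    hausdist dbarM (Msigma (oxtobyShift p))
        (Msigma ({fun _ => false, fun _ => true} : Set (ℕ → Bool))) < δ := by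
  obtain ⟨hfar, hclose⟩ := statement10_general p hpos hdvd hsummable
  exact ⟨by linarith, hclose.trans_lt hsum⟩

end DbarPaper
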